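/- arXiv:2010.14686 — 3 statements merged into one kernel-verified Lean document; each statement's English description precedes it below -/
import Mathlib

section
/- Let X be a shift space, φ : Σ → ℝ continuous, b = sup{∫φ dμ : μ ∈ M_X}, and ε > 0. Fix n ∈ ℕ, let F_n be the complement of L(X,n) in A^n, and let X_n be the subshift of finite type with forbidden words F_n. If Y is a transitive component of X_n with Y ∩ X ≠ ∅, then for every word w ∈ L(Y) there exists a periodic point y ∈ Y containing w as a subword such that ∫φ dμ_y < b + 4ε, where μ_y is the invariant probability measure equidistributed on the orbit of y. -/
open Filter MeasureTheory Topology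
open scoped BigOperators ENNReal

noncomputable section

namespace PaperStmt

/-- The full two-sided shift: bi-infinite sequences over the alphabet `Fin d`. -/
abbrev FullShift (d : ℕ) := ℤ → Fin d

/-- The (left) shift map `f(x)_k = x_{k+1}`. -/
def shift (d : ℕ) : FullShift d → FullShift d := fun x k => x (k + 1)

/-- A (two-sided) shift space: a nonempty closed shift-invariant subset. -/
def IsShiftSpace {d : ℕ} (X : Set (FullShift d)) : Prop :=
  X.Nonempty ∧ IsClosed X ∧ shift d '' X = X

/-- The cylinder at position `0` determined by a word `w` of length `n`. -/
def cyl {d n : ℕ} (w : Fin n → Fin d) : Set (FullShift d) :=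
  {x | ∀ i : Fin n, x ((i : ℕ) : ℤ) = w i}

/-- The language of `X` in length `n`: words of length `n` occurring in elements of `X`
(at position `0`; for shift-invariant `X` this is occurrence anywhere). -/
def langSet {d : ℕ} (X : Set (FullShift d)) (n : ℕ) : Set (Fin n → Fin d) :=
  {w | (X ∩ cyl w).Nonempty}

/-- Birkhoff sum `S_n φ`. -/
def birkhoff {d : ℕ} (φ : FullShift d → ℝ) (n : ℕ) (x : FullShift d) : ℝ :=
  ∑ k ∈ Finset.range n, φ ((shift d)^[k] x)

open Classical in
/-- The `n`-th partition function `Z_n(φ)` of `X`. -/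
def Zfun {d : ℕ} (X : Set (FullShift d)) (φ : FullShift d → ℝ) (n : ℕ) : ℝ :=
  ∑ w : Fin n → Fin d,
    if (X ∩ cyl w).Nonempty then Real.exp (sSup (birkhoff φ n '' (X ∩ cyl w))) else 0

/-- Topological pressure `P_top(X,φ) = lim (1/n) log Z_n(φ) = inf_n (1/n) log Z_n(φ)`. -/
def pressure {d : ℕ} (X : Set (FullShift d)) (φ : FullShift d → ℝ) : ℝ :=
  ⨅ n : ℕ, (1 / (n + 1 : ℝ)) * Real.log (Zfun X φ (n + 1))

/-- Topological entropy `h_top(X) = inf_n (1/n) log |L(X,n)|`. -/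
def entTop {d : ℕ} (X : Set (FullShift d)) : ℝ :=
  ⨅ n : ℕ, (1 / (n + 1 : ℝ)) * Real.log ((langSet X (n + 1)).ncard : ℝ)

/-- The shift-invariant Borel probability measures giving `X` full measure. -/
def InvProb {d : ℕ} (X : Set (FullShift d)) : Set (Measure (FullShift d)) :=
  {μ | IsProbabilityMeasure μ ∧ μ.map (shift d) = μ ∧ μ X = 1}

/-- Measure-theoretic (Kolmogorov–Sinai) entropy of an invariant measure,
computed via cylinder sets: `h_μ = lim -(1/n) Σ_{|w|=n} μ[w] log μ[w]`. -/
def mEnt {d : ℕ} (μ : Measure (FullShift d)) : ℝ :=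
  Filter.liminf
    (fun n : ℕ => (1 / (n + 1 : ℝ)) *
      ∑ w : Fin (n + 1) → Fin d, Real.negMulLog (μ (cyl w)).toReal)
    Filter.atTop

/-- The free energy `h_μ(f) + ∫ φ dμ` of an invariant measure. -/
def freeEnergy {d : ℕ} (μ : Measure (FullShift d)) (φ : FullShift d → ℝ) : ℝ :=
  mEnt μ + ∫ x, φ x ∂μ

/-- `sup { ∫ φ dμ : μ ∈ M_X }`. -/
def intAvg {d : ℕ} (X : Set (FullShift d)) (φ : FullShift d → ℝ) : ℝ :=
  sSup {r | ∃ μ ∈ InvProb X, r = ∫ x, φ x ∂μ}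

/-- `μ` is an equilibrium state of `φ` on `X`. -/
def IsEqState {d : ℕ} (X : Set (FullShift d)) (φ : FullShift d → ℝ)
    (μ : Measure (FullShift d)) : Prop :=
  μ ∈ InvProb X ∧ freeEnergy μ φ = pressure X φ

/-- `p : ℤ → ℤ` parses `x` into consecutive generator blocks from `𝒢`:
the block of `x` from `p j` to `p (j+1) - 1` is a generator, for every `j`. -/
def IsParsing {d : ℕ} (𝒢 : Set (List (Fin d))) (x : FullShift d) (p : ℤ → ℤ) : Prop :=
  StrictMono p ∧ ∀ j : ℤ, ∃ g ∈ 𝒢,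
    p (j + 1) = p j + g.length ∧ ∀ (l : ℕ) (hl : l < g.length), x (p j + l) = g[l]

/-- `X_seq`: the set of bi-infinite concatenations of generators. -/
def Xseq {d : ℕ} (𝒢 : Set (List (Fin d))) : Set (FullShift d) :=
  {x | ∃ p : ℤ → ℤ, IsParsing 𝒢 x p}

/-- The coded shift generated by `𝒢`: the closure of `X_seq`. -/
def codedShift {d : ℕ} (𝒢 : Set (List (Fin d))) : Set (FullShift d) :=
  closure (Xseq 𝒢)

/-- `𝒢` is a unique representation: every `x ∈ X_seq` admits exactly one parsing
into generator blocks (i.e. the set of cut points is uniquely determined). -/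
def UniqueRep {d : ℕ} (𝒢 : Set (List (Fin d))) : Prop :=
  ∀ (x : FullShift d) (p q : ℤ → ℤ),
    IsParsing 𝒢 x p → IsParsing 𝒢 x q → Set.range p = Set.range q

/-- `P_seq(φ) = sup { h_μ + ∫φ dμ : μ ∈ M_X, μ(Xs) = 1 }`. -/
def PseqOf {d : ℕ} (X Xs : Set (FullShift d)) (φ : FullShift d → ℝ) : ℝ :=
  sSup {r | ∃ μ ∈ InvProb X, μ Xs = 1 ∧ r = freeEnergy μ φ}

/-- `P_lim(φ) = sup { h_μ + ∫φ dμ : μ ∈ M_X, μ(X \ Xs) = 1 }`. -/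
def PlimOf {d : ℕ} (X Xs : Set (FullShift d)) (φ : FullShift d → ℝ) : ℝ :=
  sSup {r | ∃ μ ∈ InvProb X, μ (X \ Xs) = 1 ∧ r = freeEnergy μ φ}

/-- `φ` has strict full sequential pressure: `P_seq(φ) > P_lim(φ)`. -/
def StrictFSP {d : ℕ} (X Xs : Set (FullShift d)) (φ : FullShift d → ℝ) : Prop :=
  PlimOf X Xs φ < PseqOf X Xs φ

/-- `φ ∈ FSSP(X)`: `φ` lies in the sup-norm closure (within `C(X,ℝ)`) of the
set of continuous potentials with strict full sequential pressure. -/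
def InFSSP {d : ℕ} (X Xs : Set (FullShift d)) (φ : FullShift d → ℝ) : Prop :=
  ∀ ε : ℝ, 0 < ε → ∃ ψ : FullShift d → ℝ, ContinuousOn ψ X ∧
    (∀ x ∈ X, |φ x - ψ x| ≤ ε) ∧ StrictFSP X Xs ψ

/-- The invariant probability measure equidistributed on the (period-`ℓ`) orbit of `y`. -/
def periodicMeasure {d : ℕ} (y : FullShift d) (ℓ : ℕ) : Measure (FullShift d) :=
  (ℓ : ℝ≥0∞)⁻¹ • ∑ k ∈ Finset.range ℓ, Measure.dirac ((shift d)^[k] y)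

/-- `y` is periodic with period `ℓ ≥ 1`. -/
def IsPeriodicOf {d : ℕ} (y : FullShift d) (ℓ : ℕ) : Prop :=
  1 ≤ ℓ ∧ (shift d)^[ℓ] y = y


/-- `Y` is a topologically transitive shift space. -/
def TopTransitive {d : ℕ} (Y : Set (FullShift d)) : Prop :=
  IsShiftSpace Y ∧ ∀ U V : Set (FullShift d), IsOpen U → IsOpen V →
    (Y ∩ U).Nonempty → (Y ∩ V).Nonempty →
    ∃ n : ℕ, ((shift d)^[n] '' (Y ∩ U) ∩ (Y ∩ V)).Nonempty

/-- `Y` is a transitive component of `Z`: a maximal transitive invariant subset. -/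
def IsTransComponent {d : ℕ} (Y Z : Set (FullShift d)) : Prop :=
  TopTransitive Y ∧ Y ⊆ Z ∧
    ∀ Y' : Set (FullShift d), TopTransitive Y' → Y' ⊆ Z → Y ⊆ Y' → Y = Y'

/-- The SFT `X_{F_n}` whose forbidden words `F_n` are the complement of `L(X,n)`:
the points all of whose length-`n` subwords lie in `L(X,n)`. -/
def sftApprox {d : ℕ} (X : Set (FullShift d)) (n : ℕ) : Set (FullShift d) :=
  {y | ∀ i : ℤ, (fun t : Fin n => y (i + (t : ℕ))) ∈ langSet X n}

/-!
Fix `x ∈ X ∩ Y`. Every weak limit of the empirical measures along the orbit of `x` is an invariant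
measure on `X`, so the Birkhoff averages of `x` are eventually smaller than `b + δ`.

The component `Y` is itself a subshift of finite type: its `n`-step approximation is transitive and
lies between `Y` and `X_n`, so it equals `Y` by maximality. Two points of `Y` sharing a word of
length `n` can therefore be spliced, and transitivity connects any two such words within a gap that
is bounded, because there are finitely many of them. Hence `w` followed by a window of `x` of length
about `N` closes up to a periodic point of `Y` whose period exceeds `N` by a bounded amount. As
`N → ∞` the bounded part is negligible, and on the window `φ` differs from its values along the
orbit of `x` by at most `δ`, by uniform continuity.
-/

section BirkhoffSums

variable {α : Type*}

theorem birkhoffAverage_comp_apply (R : Type*) {M : Type*} [DivisionSemiring R] [AddCommMonoid M]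
    [Module R M] (T : α → α) (g : α → M) (N : ℕ) (x : α) :
    birkhoffAverage R T (g ∘ T) N x = birkhoffAverage R T g N (T x) := by
  simp only [birkhoffAverage, birkhoffSum, Function.comp_apply, ← Function.iterate_succ_apply',
    ← Function.iterate_succ_apply]

theorem birkhoffSum_le_mul {T : α → α} {φ : α → ℝ} {B : ℝ} (hB : ∀ z, φ z ≤ B) (N : ℕ) (x : α) :
    birkhoffSum T φ N x ≤ N * B := by
  simpa [birkhoffSum] using
    Finset.sum_le_card_nsmul (Finset.range N) (fun k => φ (T^[k] x)) B fun k _ => hB _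

/-- If the orbit of `y` follows that of `x` during `N` steps, then the `a` steps before and the `c`
steps after that are negligible for large `N`. -/
theorem birkhoffAverage_lt_of_shadowing {T : α → α} {φ : α → ℝ} {x y : α} {b B δ : ℝ} {a N c : ℕ}
    (hB : ∀ z, φ z ≤ B) (hshadow : ∀ k < N, φ (T^[k] (T^[a] y)) ≤ φ (T^[k] x) + δ)
    (hδ : 0 ≤ δ) (hN : 0 < N) (hx : birkhoffAverage ℝ T φ N x < b + δ)
    (hlarge : (a + c) * (B - b) < N * δ) :
    birkhoffAverage ℝ T φ (a + N + c) y < b + 3 * δ := by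
  have hNpos : (0 : ℝ) < N := by exact_mod_cast hN
  have hmid : birkhoffSum T φ N (T^[a] y) ≤ birkhoffSum T φ N x + N * δ := by
    simpa [birkhoffSum, Finset.sum_add_distrib] using
      Finset.sum_le_sum fun k hk => hshadow k (Finset.mem_range.1 hk)
  have hsum : birkhoffSum T φ (a + N + c) y ≤ a * B + (birkhoffSum T φ N x + N * δ) + c * B := by
    rw [birkhoffSum_add, birkhoffSum_add]
    gcongr <;> exact birkhoffSum_le_mul hB _ _
  rw [birkhoffAverage, smul_eq_mul, inv_mul_lt_iff₀ hNpos] at hx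
  rw [birkhoffAverage, smul_eq_mul, inv_mul_lt_iff₀ (by positivity)]
  have hslack : 0 ≤ ((a : ℝ) + c) * δ := by positivity
  push_cast
  linarith

end BirkhoffSums

section EmpiricalMeasures

variable {α : Type*} [MeasurableSpace α] {T : α → α} {x : α} {s : Set α}

/-- The uniform distribution on the orbit segment `x, T x, …, T^[N - 1] x`; it is the zero measure
for `N = 0`. For the shift and a periodic point it is `periodicMeasure`. -/
def empiricalMeasure (T : α → α) (x : α) (N : ℕ) : Measure α :=
  (N : ℝ≥0∞)⁻¹ • ∑ k ∈ Finset.range N, Measure.dirac (T^[k] x)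

theorem integral_empiricalMeasure [MeasurableSingletonClass α] {E : Type*} [NormedAddCommGroup E]
    [NormedSpace ℝ E] [CompleteSpace E] (T : α → α) (g : α → E) (N : ℕ) (x : α) :
    ∫ z, g z ∂empiricalMeasure T x N = birkhoffAverage ℝ T g N x := by
  rw [empiricalMeasure, integral_smul_measure,
    integral_finsetSum_measure fun k _ => integrable_dirac enorm_lt_top]
  simp [birkhoffAverage, birkhoffSum]

theorem empiricalMeasure_succ_eq_one (hs : MeasurableSet s) (hx : ∀ k, T^[k] x ∈ s) (N : ℕ) :
    empiricalMeasure T x (N + 1) s = 1 := by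
  simp only [empiricalMeasure, Measure.smul_apply, Measure.finsetSum_apply,
    Measure.dirac_apply' _ hs, Set.indicator_of_mem (hx _), Pi.one_apply, Finset.sum_const,
    Finset.card_range, nsmul_eq_mul, mul_one, smul_eq_mul]
  exact ENNReal.inv_mul_cancel (by simp) (by finiteness)

/-- `empiricalMeasure` as a probability measure, indexed so that the orbit segment, which has
`N + 1` points, is never empty. -/
def empiricalProb (T : α → α) (x : α) (N : ℕ) : ProbabilityMeasure α :=
  ⟨empiricalMeasure T x (N + 1),
    ⟨empiricalMeasure_succ_eq_one MeasurableSet.univ (fun _ => Set.mem_univ _) N⟩⟩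

variable [TopologicalSpace α] {l : Filter ℕ} {μ : ProbabilityMeasure α}

theorem tendsto_birkhoffAverage_of_tendsto_empiricalProb [OpensMeasurableSpace α] [T1Space α]
    (hμ : Tendsto (empiricalProb T x) l (𝓝 μ)) (g : BoundedContinuousFunction α ℝ) :
    Tendsto (fun N => birkhoffAverage ℝ T g (N + 1) x) l (𝓝 (∫ z, g z ∂(μ : Measure α))) := by
  simpa only [empiricalProb, ProbabilityMeasure.coe_mk, integral_empiricalMeasure] using
    ProbabilityMeasure.tendsto_iff_forall_integral_tendsto.1 hμ g

theorem map_eq_of_tendsto_empiricalProb [BorelSpace α] [T1Space α] [HasOuterApproxClosed α]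
    [l.NeBot] (hl : l ≤ atTop) (hT : Continuous T) (hμ : Tendsto (empiricalProb T x) l (𝓝 μ)) :
    (μ : Measure α).map T = μ := by
  have := Measure.isProbabilityMeasure_map (μ := (μ : Measure α)) hT.aemeasurable
  refine ext_of_forall_integral_eq_of_IsFiniteMeasure fun g => ?_
  rw [integral_map hT.aemeasurable g.continuous.aestronglyMeasurable]
  have hcomp := tendsto_birkhoffAverage_of_tendsto_empiricalProb hμ (g.compContinuous ⟨T, hT⟩)
  have hdiff : Tendsto (fun N => birkhoffAverage ℝ T g (N + 1) (T x) -
      birkhoffAverage ℝ T g (N + 1) x) l (𝓝 0) :=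
    ((tendsto_add_atTop_iff_nat 1).2 (tendsto_birkhoffAverage_apply_sub_birkhoffAverage' ℝ
      g.isBounded_range T x)).mono_left hl
  refine sub_eq_zero.1 (tendsto_nhds_unique ?_ hdiff)
  simp only [← birkhoffAverage_comp_apply]
  exact hcomp.sub (tendsto_birkhoffAverage_of_tendsto_empiricalProb hμ g)

theorem measure_eq_one_of_tendsto_empiricalProb [OpensMeasurableSpace α] [HasOuterApproxClosed α]
    [l.NeBot] (hs : IsClosed s) (hx : ∀ k, T^[k] x ∈ s)
    (hμ : Tendsto (empiricalProb T x) l (𝓝 μ)) : (μ : Measure α) s = 1 := by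
  refine le_antisymm prob_le_one ?_
  simpa only [empiricalProb, ProbabilityMeasure.coe_mk,
    empiricalMeasure_succ_eq_one hs.measurableSet hx, limsup_const] using
    ProbabilityMeasure.limsup_measure_closed_le_of_tendsto hμ hs

/-- Otherwise, by compactness, the empirical measures along the exceptional times accumulate at an
invariant measure on `s` violating `hr`. -/
theorem eventually_birkhoffAverage_lt [BorelSpace α] [CompactSpace α] [T2Space α]
    [HasOuterApproxClosed α] (hT : Continuous T) (hs : IsClosed s) (hx : ∀ k, T^[k] x ∈ s)
    {φ : α → ℝ} (hφ : Continuous φ) {r : ℝ}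
    (hr : ∀ μ : Measure α, IsProbabilityMeasure μ → μ.map T = μ → μ s = 1 → ∫ z, φ z ∂μ < r) :
    ∀ᶠ N in atTop, birkhoffAverage ℝ T φ N x < r := by
  rw [← map_add_atTop_eq_nat 1, eventually_map]
  by_contra hfreq
  simp only [not_eventually, not_lt] at hfreq
  have := frequently_iff_neBot.1 hfreq
  let U := Ultrafilter.of (atTop ⊓ 𝓟 {N | r ≤ birkhoffAverage ℝ T φ (N + 1) x})
  have hU : (U : Filter ℕ) ≤ atTop ⊓ 𝓟 {N | r ≤ birkhoffAverage ℝ T φ (N + 1) x} :=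
    Ultrafilter.of_le _
  obtain ⟨μ, -, hμ⟩ := isCompact_univ.ultrafilter_le_nhds (U.map (empiricalProb T x)) (by simp)
  have hlim : Tendsto (empiricalProb T x) U (𝓝 μ) := hμ
  have hr_le : r ≤ ∫ z, φ z ∂(μ : Measure α) :=
    ge_of_tendsto (tendsto_birkhoffAverage_of_tendsto_empiricalProb hlim (.mkOfCompact ⟨φ, hφ⟩))
      (le_principal_iff.1 (hU.trans inf_le_right))
  exact hr_le.not_gt (hr μ inferInstance
    (map_eq_of_tendsto_empiricalProb (hU.trans inf_le_left) hT hlim)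
    (measure_eq_one_of_tendsto_empiricalProb hs hx hlim))

end EmpiricalMeasures

section FunctionSpaces

variable {ι A : Type*} [TopologicalSpace A]

theorem exists_finset_forall_eqOn_mem [DiscreteTopology A] {U : Set (ι → A)} {x : ι → A}
    (hU : U ∈ 𝓝 x) : ∃ I : Finset ι, ∀ y, Set.EqOn y x I → y ∈ U := by
  obtain ⟨V, hVU, hV, hxV⟩ := mem_nhds_iff.1 hU
  obtain ⟨I, u, hu, hIV⟩ := isOpen_pi_iff.1 hV x hxV
  exact ⟨I, fun y hy => hVU (hIV fun i hi => by rw [hy hi]; exact (hu i hi).2)⟩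

/-- The pairs agreeing on `I` form compact sets that decrease to the diagonal. -/
theorem exists_finset_forall_eqOn_dist_lt [CompactSpace A] [T2Space A] {E : Type*}
    [PseudoMetricSpace E] {φ : (ι → A) → E} (hφ : Continuous φ) {ε : ℝ} (hε : 0 < ε) :
    ∃ I : Finset ι, ∀ x y, Set.EqOn x y I → dist (φ x) (φ y) < ε := by
  let V (I : Finset ι) : Set ((ι → A) × (ι → A)) := {p | Set.EqOn p.1 p.2 I}
  have hVclosed (I : Finset ι) : IsClosed (V I) := by
    simp only [V, Set.EqOn, Set.ofPred_forall]
    exact isClosed_biInter fun i _ => isClosed_eq (by fun_prop) (by fun_prop)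
  have hVanti : Antitone V := fun I J hIJ p hp => hp.mono (Finset.coe_subset.2 hIJ)
  have hnhds : ∀ p ∈ ⋂ I, V I, {p | dist (φ p.1) (φ p.2) < ε} ∈ 𝓝 p := by
    rintro ⟨x, y⟩ hxy
    obtain rfl : x = y := funext fun i => Set.mem_iInter.1 hxy {i} (by simp)
    exact (isOpen_lt (by fun_prop) continuous_const).mem_nhds (by simpa using hε)
  obtain ⟨I, hI⟩ := exists_subset_nhds_of_compactSpace hVanti.directed_ge hVclosed hnhds
  exact ⟨I, fun x y hxy => hI (a := (x, y)) hxy⟩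

theorem exists_coe_subset_Icc_neg_natCast (I : Finset ℤ) :
    ∃ R : ℕ, (I : Set ℤ) ⊆ Set.Icc (-R : ℤ) R :=
  ⟨I.sup Int.natAbs, fun i hi => by
    have := Finset.le_sup (f := Int.natAbs) hi
    rw [Set.mem_Icc]
    omega⟩

end FunctionSpaces

section Translation

variable {A : Type*} {d : ℕ}

/-- The action of `ℤ` on bi-infinite sequences generated by the shift: `translate k` is the
`k`-th power of the shift, also for negative `k`. -/
def translate (k : ℤ) (x : ℤ → A) : ℤ → A := fun i => x (i + k)

theorem eqOn_translate_neg_of_mem_cyl {d n : ℕ} {x q : FullShift d} {a : ℤ}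
    (hq : q ∈ cyl fun t : Fin n => x (a + (t : ℕ))) :
    Set.EqOn x (translate (-a) q) (Set.Ico a (a + n)) := by
  rintro i ⟨hai, hian⟩
  obtain ⟨t, rfl⟩ := Int.le.dest hai
  simpa [translate] using (hq ⟨t, by lia⟩).symm

theorem shift_iterate (k : ℕ) : (shift d)^[k] = translate k := by
  induction k with
  | zero => funext x i; simp [translate]
  | succ k ih =>
    funext x i
    rw [Function.iterate_succ_apply', ih]
    simp only [shift, translate, Nat.cast_succ]
    congr 1
    ring

theorem isPeriodicOf_of_periodic {y : FullShift d} {ℓ : ℕ} (hℓ : 1 ≤ ℓ)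
    (hy : Function.Periodic y (ℓ : ℤ)) : IsPeriodicOf y ℓ :=
  ⟨hℓ, by rw [shift_iterate]; exact funext hy⟩

theorem IsShiftSpace.translate_mem {X : Set (FullShift d)} (hX : IsShiftSpace X) {x : FullShift d}
    (hx : x ∈ X) (k : ℤ) : translate k x ∈ X := by
  induction k with
  | zero => convert hx using 1; funext i; simp [translate]
  | succ k ih =>
    have hshift : shift d (translate k x) ∈ X := hX.2.2 ▸ Set.mem_image_of_mem _ ih
    convert hshift using 1
    funext i
    simp only [shift, translate]
    congr 1
    ring
  | pred k ih =>
    rw [← hX.2.2] at ih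
    obtain ⟨y, hy, hyx⟩ := ih
    convert hy using 1
    funext i
    have := congrFun hyx (i - 1)
    simp only [shift, translate, sub_add_cancel] at this ⊢
    rw [this]
    congr 1
    ring

theorem continuous_shift : Continuous (shift d) :=
  continuous_pi fun k => continuous_apply (k + 1)

end Translation

section FiniteType

variable {d n : ℕ} {X Y : Set (FullShift d)}

theorem translate_mem_sftApprox {y : FullShift d} (hy : y ∈ sftApprox X n) (k : ℤ) :
    translate k y ∈ sftApprox X n := by
  intro i
  convert hy (i + k) using 2 with t
  simp only [translate]
  ring_nf

theorem mem_sftApprox_of_forall_eqOn {y : FullShift d}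
    (hy : ∀ i : ℤ, ∃ x ∈ sftApprox X n, Set.EqOn y x (Set.Ico i (i + n))) :
    y ∈ sftApprox X n := by
  intro i
  obtain ⟨x, hx, hyx⟩ := hy i
  convert hx i using 2 with t
  exact hyx (by grind)

theorem IsShiftSpace.subset_sftApprox (hX : IsShiftSpace X) (n : ℕ) : X ⊆ sftApprox X n :=
  fun x hx i => ⟨translate i x, hX.translate_mem hx i, fun t => by simp only [translate, add_comm]⟩

theorem sftApprox_subset_of_subset (hYX : Y ⊆ sftApprox X n) :
    sftApprox Y n ⊆ sftApprox X n := by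
  intro y hy
  refine mem_sftApprox_of_forall_eqOn fun i => ?_
  obtain ⟨u, hu, huy⟩ := hy i
  exact ⟨translate (-i) u, translate_mem_sftApprox (hYX hu) _, eqOn_translate_neg_of_mem_cyl huy⟩

theorem isClosed_sftApprox (X : Set (FullShift d)) (n : ℕ) : IsClosed (sftApprox X n) := by
  have hinter : sftApprox X n =
      ⋂ i : ℤ, (fun (y : FullShift d) (t : Fin n) => y (i + (t : ℕ))) ⁻¹' langSet X n := by
    ext y
    simp [sftApprox]
  rw [hinter]
  exact isClosed_iInter fun i => (isClosed_discrete _).preimage (by fun_prop)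

theorem isShiftSpace_sftApprox (hX : IsShiftSpace X) (n : ℕ) : IsShiftSpace (sftApprox X n) := by
  refine ⟨hX.1.mono (hX.subset_sftApprox n), isClosed_sftApprox X n,
    Set.Subset.antisymm ?_ fun y hy => ?_⟩
  · rintro _ ⟨y, hy, rfl⟩
    exact translate_mem_sftApprox hy 1
  · exact ⟨translate (-1) y, translate_mem_sftApprox hy _, by funext k; simp [shift, translate]⟩

theorem exists_glue {x y : FullShift d} (hx : x ∈ sftApprox X n) (hy : y ∈ sftApprox X n) {a : ℤ}
    (hxy : Set.EqOn x y (Set.Ico a (a + n))) :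
    ∃ z ∈ sftApprox X n, Set.EqOn z x (Set.Iio (a + n)) ∧ Set.EqOn z y (Set.Ici a) := by
  let z : FullShift d := (Set.Iio a).piecewise x y
  have hzx : Set.EqOn z x (Set.Iio (a + n)) := by
    intro i hi
    by_cases hia : i < a
    · exact Set.piecewise_eq_of_mem _ _ _ hia
    · rw [hxy ⟨not_lt.1 hia, hi⟩]
      exact Set.piecewise_eq_of_notMem _ _ _ hia
  have hzy : Set.EqOn z y (Set.Ici a) := fun i hi =>
    Set.piecewise_eq_of_notMem _ _ _ (Set.notMem_Iio.2 hi)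
  refine ⟨z, mem_sftApprox_of_forall_eqOn fun i => ?_, hzx, hzy⟩
  rcases le_total i a with hia | hai
  · exact ⟨x, hx, hzx.mono (by grind)⟩
  · exact ⟨y, hy, hzy.mono (by grind)⟩

theorem apply_emod_eq_of_eqOn {A : Type*} {x : ℤ → A} {L n : ℕ} (hL : 0 < L)
    (hx : Set.EqOn (translate L x) x (Set.Ico 0 n)) :
    Set.EqOn (fun i => x (i % L)) x (Set.Ico 0 (L + n)) := by
  rintro i ⟨hi, hin⟩
  lift i to ℕ using hi
  induction i using Nat.strong_induction_on with
  | _ i ih =>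
    rcases lt_or_ge i L with hiL | hLi
    · simp only [Int.emod_eq_of_lt (Int.natCast_nonneg i) (Int.ofNat_lt.2 hiL)]
    · obtain ⟨k, rfl⟩ := Nat.exists_eq_add_of_le hLi
      have hk := hx (x := k) (by grind)
      have ihk := ih k (by lia) (by lia)
      simp only [translate] at hk ihk
      rw [add_comm L k]
      push_cast
      simpa only [Int.add_emod_right, hk] using ihk

theorem exists_periodic_of_eqOn {x : FullShift d} (hx : x ∈ sftApprox X n) {L : ℕ} (hL : 0 < L)
    (hxL : Set.EqOn (translate L x) x (Set.Ico 0 n)) :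
    ∃ y ∈ sftApprox X n, Function.Periodic y (L : ℤ) ∧ Set.EqOn y x (Set.Ico 0 (L + n)) := by
  have hyx := apply_emod_eq_of_eqOn hL hxL
  refine ⟨fun i => x (i % L), mem_sftApprox_of_forall_eqOn fun i => ?_, fun i => by simp, hyx⟩
  refine ⟨translate (i % L - i) x, translate_mem_sftApprox hx _, fun k hk => ?_⟩
  have hpos := Int.emod_nonneg i (Int.natCast_pos.2 hL).ne'
  have hlt := Int.emod_lt_of_pos i (Int.natCast_pos.2 hL)
  have hmod : k + (i % L - i) ≡ k [ZMOD L] := by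
    simpa only [sub_self, add_zero] using ((Int.mod_modEq i L).sub_right i).add_left k
  simpa only [translate, hmod.eq] using hyx (x := k + (i % L - i)) (by grind)

end FiniteType

section Transitivity

variable {d n : ℕ} {X Y : Set (FullShift d)}

theorem isOpen_cyl (w : Fin n → Fin d) : IsOpen (cyl w) := by
  have hpreimage : cyl w = (fun (x : FullShift d) (t : Fin n) => x (t : ℕ)) ⁻¹' {w} := by
    ext x
    simp [cyl, funext_iff]
  rw [hpreimage]
  exact (isOpen_discrete _).preimage (by fun_prop)

theorem TopTransitive.exists_connecting (hY : TopTransitive Y) {v v' : Fin n → Fin d}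
    (hv : v ∈ langSet Y n) (hv' : v' ∈ langSet Y n) :
    ∃ j : ℕ, ∃ q ∈ Y, q ∈ cyl v ∧ translate j q ∈ cyl v' := by
  obtain ⟨j, _, ⟨q, ⟨hqY, hq⟩, rfl⟩, -, hq'⟩ := hY.2 _ _ (isOpen_cyl v) (isOpen_cyl v') hv hv'
  exact ⟨j, q, hqY, hq, shift_iterate (d := d) j ▸ hq'⟩

theorem TopTransitive.exists_connecting_le (hY : TopTransitive Y) (n : ℕ) :
    ∃ C : ℕ, ∀ v ∈ langSet Y n, ∀ v' ∈ langSet Y n,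
      ∃ j ≤ C, ∃ q ∈ Y, q ∈ cyl v ∧ translate j q ∈ cyl v' := by
  refine Eventually.exists (f := atTop)
    (eventually_all.2 fun v => eventually_imp_distrib_left.2 fun hv =>
      eventually_all.2 fun v' => eventually_imp_distrib_left.2 fun hv' => ?_)
  obtain ⟨j, hj⟩ := hY.exists_connecting hv hv'
  exact (eventually_ge_atTop j).mono fun C hC => ⟨j, hC, hj⟩

theorem TopTransitive.exists_bridge (hY : TopTransitive Y) (n : ℕ) :
    ∃ C : ℕ, ∀ x ∈ sftApprox Y n, ∀ x' ∈ sftApprox Y n, ∀ a b : ℤ, ∃ j ≤ C,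
      ∃ z ∈ sftApprox Y n, Set.EqOn z x (Set.Iio (a + n)) ∧
        Set.EqOn (translate (a + j - b) z) x' (Set.Ici b) := by
  obtain ⟨C, hC⟩ := hY.exists_connecting_le n
  refine ⟨C, fun x hx x' hx' a b => ?_⟩
  obtain ⟨j, hj, q, hq, hqx, hqx'⟩ := hC _ (hx a) _ (hx' b)
  obtain ⟨g, hg, hgx, hgq⟩ := exists_glue hx
    (translate_mem_sftApprox (hY.1.subset_sftApprox n hq) (-a)) (eqOn_translate_neg_of_mem_cyl hqx)
  have hgx' : Set.EqOn g (translate (b - a - j) x') (Set.Ico (a + j) (a + j + n)) := by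
    intro i hi
    rw [hgq (by grind)]
    refine Eq.trans ?_ (eqOn_translate_neg_of_mem_cyl hqx' (by grind)).symm
    simp only [translate]
    ring_nf
  obtain ⟨z, hz, hzg, hzx'⟩ := exists_glue hg (translate_mem_sftApprox hx' (b - a - j)) hgx'
  refine ⟨j, hj, z, hz, fun i hi => (hzg (by grind)).trans (hgx hi), fun i hi => ?_⟩
  refine (hzx' (by grind)).trans ?_
  simp only [translate]
  ring_nf

theorem topTransitive_sftApprox (hY : TopTransitive Y) (n : ℕ) :
    TopTransitive (sftApprox Y n) := by
  refine ⟨isShiftSpace_sftApprox hY.1 n, ?_⟩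
  rintro U V hU hV ⟨u, hu, huU⟩ ⟨v, hv, hvV⟩
  obtain ⟨I, hI⟩ := exists_finset_forall_eqOn_mem (hU.mem_nhds huU)
  obtain ⟨J, hJ⟩ := exists_finset_forall_eqOn_mem (hV.mem_nhds hvV)
  obtain ⟨R, hR⟩ := exists_coe_subset_Icc_neg_natCast (I ∪ J)
  obtain ⟨C, hC⟩ := hY.exists_bridge n
  obtain ⟨j, -, z, hz, hzu, hzv⟩ := hC u hu v hv (R + 1) (-R)
  rw [Finset.coe_union, Set.union_subset_iff] at hR
  have hzU : z ∈ U := hI z (hzu.mono fun i hi => by grind)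
  have hzV : (shift d)^[R + 1 + j + R] z ∈ V := by
    rw [shift_iterate]
    push_cast
    rw [← sub_neg_eq_add]
    exact hJ _ (hzv.mono fun i hi => by grind)
  exact ⟨_, _, ⟨z, ⟨hz, hzU⟩, rfl⟩, shift_iterate (d := d) _ ▸ translate_mem_sftApprox hz _, hzV⟩

theorem IsTransComponent.sftApprox_eq (hY : IsTransComponent Y (sftApprox X n)) :
    sftApprox Y n = Y :=
  (hY.2.2 _ (topTransitive_sftApprox hY.1 n) (sftApprox_subset_of_subset hY.2.1)
    (hY.1.1.subset_sftApprox n)).symm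

theorem TopTransitive.exists_periodic_closing (hY : TopTransitive Y) (n : ℕ) :
    ∃ C : ℕ, ∀ x ∈ sftApprox Y n, ∀ M : ℕ, 0 < M → ∃ c ≤ C, ∃ y ∈ sftApprox Y n,
      Function.Periodic y ((M + c : ℕ) : ℤ) ∧ Set.EqOn y x (Set.Ico 0 M) := by
  obtain ⟨C, hC⟩ := hY.exists_bridge n
  refine ⟨C, fun x hx M hM => ?_⟩
  obtain ⟨c, hc, z, hz, hzx, hzx'⟩ := hC x hx x hx M 0
  obtain ⟨y, hy, hper, hyz⟩ := exists_periodic_of_eqOn hz (L := M + c) (by lia) fun i hi => by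
    simpa [translate, hzx (show i < M + n by grind)] using hzx' hi.1
  exact ⟨c, hc, y, hy, hper, fun i hi => (hyz (by grind)).trans (hzx (by grind))⟩

theorem TopTransitive.exists_periodic_shadowing (hY : TopTransitive Y) {x : FullShift d}
    (hx : x ∈ sftApprox Y n) {m : ℕ} {w : Fin m → Fin d} (hw : w ∈ langSet (sftApprox Y n) m)
    (R : ℕ) :
    ∃ a C : ℕ, ∀ N : ℕ, 0 < N → ∃ c ≤ C, ∃ y ∈ sftApprox Y n,
      Function.Periodic y ((a + N + c : ℕ) : ℤ) ∧ y ∈ cyl w ∧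
        Set.EqOn (translate a y) x (Set.Ico (-R : ℤ) (N + R)) := by
  obtain ⟨p, hp, hpw⟩ := hw
  obtain ⟨_, hbridge⟩ := hY.exists_bridge n
  obtain ⟨j, -, z, hz, hzp, hzx⟩ := hbridge p hp x hx m (-R)
  obtain ⟨C, hC⟩ := hY.exists_periodic_closing n
  refine ⟨m + j + R, R + C, fun N hN => ?_⟩
  obtain ⟨c, hc, y, hy, hper, hyz⟩ := hC z hz (m + j + R + N + R) (by lia)
  refine ⟨R + c, by lia, y, hy, by rwa [← add_assoc], fun t => ?_, fun i hi => ?_⟩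
  · rw [hyz (by grind), hzp (by grind), hpw t]
  · rw [← hzx (by grind)]
    simp only [translate, Nat.cast_add, sub_neg_eq_add]
    exact hyz (by grind)

end Transitivity

section ErgodicOptimization

variable {d : ℕ} {X Y : Set (FullShift d)} {φ : FullShift d → ℝ}

theorem integral_periodicMeasure (φ : FullShift d → ℝ) (y : FullShift d) (ℓ : ℕ) :
    ∫ z, φ z ∂periodicMeasure y ℓ = birkhoffAverage ℝ (shift d) φ ℓ y :=
  integral_empiricalMeasure (shift d) φ ℓ y

theorem integral_le_intAvg (hφ : Continuous φ) {μ : Measure (FullShift d)} (hμ : μ ∈ InvProb X) :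
    ∫ z, φ z ∂μ ≤ intAvg X φ := by
  let g : BoundedContinuousFunction (FullShift d) ℝ := .mkOfCompact ⟨φ, hφ⟩
  refine le_csSup ⟨‖g‖, ?_⟩ ⟨μ, hμ, rfl⟩
  rintro _ ⟨ν, ⟨_, -, -⟩, rfl⟩
  exact (le_abs_self _).trans (g.norm_integral_le_norm ν)

theorem eventually_birkhoffAverage_lt_intAvg_add (hX : IsShiftSpace X) {x : FullShift d}
    (hx : x ∈ X) (hφ : Continuous φ) {ε : ℝ} (hε : 0 < ε) :
    ∀ᶠ N in atTop, birkhoffAverage ℝ (shift d) φ N x < intAvg X φ + ε :=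
  eventually_birkhoffAverage_lt continuous_shift hX.2.1
    (fun k => shift_iterate (d := d) k ▸ hX.translate_mem hx k) hφ fun _ hμ hinv hμX =>
    (integral_le_intAvg hφ ⟨hμ, hinv, hμX⟩).trans_lt (lt_add_of_pos_right _ hε)

theorem exists_forall_eqOn_dist_iterate_shift_lt (hφ : Continuous φ) {ε : ℝ} (hε : 0 < ε) :
    ∃ R : ℕ, ∀ (x y : FullShift d) (N : ℕ), Set.EqOn x y (Set.Ico (-R : ℤ) (N + R)) →
      ∀ k < N, dist (φ ((shift d)^[k] x)) (φ ((shift d)^[k] y)) < ε := by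
  obtain ⟨I, hI⟩ := exists_finset_forall_eqOn_dist_lt hφ hε
  obtain ⟨R, hR⟩ := exists_coe_subset_Icc_neg_natCast I
  refine ⟨R, fun x y N hxy k hk => ?_⟩
  rw [shift_iterate]
  exact hI _ _ fun i hi => hxy (by grind)

theorem statement5_general (hX : IsShiftSpace X) (hφ : Continuous φ) {ε : ℝ} (hε : 0 < ε) {n : ℕ}
    (hY : TopTransitive Y) (hYn : sftApprox Y n = Y) (hYX : (Y ∩ X).Nonempty) {m : ℕ}
    {w : Fin m → Fin d} (hw : w ∈ langSet Y m) :
    ∃ ℓ : ℕ, ∃ y ∈ Y, IsPeriodicOf y ℓ ∧ y ∈ cyl w ∧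
      ∫ x, φ x ∂periodicMeasure y ℓ < intAvg X φ + ε := by
  obtain ⟨x, hxY, hxX⟩ := hYX
  obtain ⟨δ, hδ, rfl⟩ : ∃ δ > 0, 3 * δ = ε := ⟨ε / 3, by positivity, by ring⟩
  obtain ⟨R, hR⟩ := exists_forall_eqOn_dist_iterate_shift_lt hφ hδ
  obtain ⟨a, C, hper⟩ := hY.exists_periodic_shadowing (hYn.symm ▸ hxY) (hYn.symm ▸ hw) R
  obtain ⟨B, hB, hbB⟩ : ∃ B, (∀ z, φ z ≤ B) ∧ intAvg X φ ≤ B := by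
    obtain ⟨B, hB⟩ := (isCompact_range hφ).bddAbove
    exact ⟨max B (intAvg X φ), fun z => (hB ⟨z, rfl⟩).trans (le_max_left _ _), le_max_right _ _⟩
  have hlarge : ∀ᶠ N : ℕ in atTop, (a + C) * (B - intAvg X φ) < N * δ :=
    (tendsto_natCast_atTop_atTop.atTop_mul_const hδ).eventually_gt_atTop _
  obtain ⟨N, hN, hNx, hNpos⟩ := (hlarge.and
    ((eventually_birkhoffAverage_lt_intAvg_add hX hxX hφ hδ).and (eventually_gt_atTop 0))).exists
  obtain ⟨c, hc, y, hy, hyper, hyw, hyx⟩ := hper N hNpos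
  refine ⟨a + N + c, y, hYn ▸ hy, isPeriodicOf_of_periodic (by lia) hyper, hyw, ?_⟩
  rw [integral_periodicMeasure]
  refine birkhoffAverage_lt_of_shadowing hB (fun k hk => ?_) hδ.le hNpos hNx (hN.trans_le' ?_)
  · rw [shift_iterate a]
    linarith [(abs_lt.1 (hR _ _ N hyx k hk)).2]
  · have : 0 ≤ B - intAvg X φ := sub_nonneg.2 hbB
    gcongr

end ErgodicOptimization

/-- in a transitive component `Y` of the SFT approximation `X_n`
meeting `X`, every word `w ∈ L(Y)` is contained in a periodic point `y ∈ Y` whose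
orbit measure satisfies `∫φ dμ_y < b + 4ε`. -/
theorem statement5 {d : ℕ} (hd : 2 ≤ d) (X : Set (FullShift d)) (hX : IsShiftSpace X)
    (φ : FullShift d → ℝ) (hφ : Continuous φ) (ε : ℝ) (hε : 0 < ε) (n : ℕ)
    (Y : Set (FullShift d)) (hY : IsTransComponent Y (sftApprox X n))
    (hYX : (Y ∩ X).Nonempty) {m : ℕ} (w : Fin m → Fin d) (hw : w ∈ langSet Y m) :
    ∃ ℓ : ℕ, ∃ y ∈ Y, IsPeriodicOf y ℓ ∧
      (∃ i : ℤ, ∀ t : Fin m, y (i + (t : ℕ)) = w t) ∧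
      ∫ x, φ x ∂(periodicMeasure y ℓ) < intAvg X φ + 4 * ε := by
  obtain ⟨ℓ, y, hy, hper, hyw, hlt⟩ :=
    statement5_general hX hφ (mul_pos four_pos hε) hY.1 hY.sftApprox_eq hYX hw
  exact ⟨ℓ, y, hy, hper, ⟨0, fun t => by rw [zero_add, hyw t]⟩, hlt⟩

end PaperStmt
end
end

section
/- Let d ≥ 1, let S_0,…,S_{d−1} ⊆ ℕ₀ be nonempty, and let Π ⊆ 𝔖_d be nonempty. Then the generalized gap shift X = X_{S_0,…,S_{d−1},Π} is a coded shift and G = { σ(0)^{s_{σ(0)}} ⋯ σ(d−1)^{s_{σ(d−1)}} d : σ ∈ Π, s_{σ(j)} ∈ S_{σ(j)} } is a unique representation of X: every x ∈ X_seq admits exactly one parsing as a bi-infinite concatenation of words of G. -/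
open Filter MeasureTheory Topology
open scoped BigOperators ENNReal

noncomputable section

namespace PaperStmt

/-- The generator word `σ(0)^{s_{σ(0)}} σ(1)^{s_{σ(1)}} ⋯ σ(d−1)^{s_{σ(d−1)}} d`
over the alphabet `{0,…,d} = Fin (d+1)`. -/
def gapGen (d : ℕ) (σ : Equiv.Perm (Fin d)) (s : Fin d → ℕ) : List (Fin (d + 1)) :=
  (List.ofFn fun j : Fin d => List.replicate (s (σ j)) (Fin.castSucc (σ j))).flatten
    ++ [Fin.last d]

/-- The generating set of the generalized gap shift `X_{S_0,…,S_{d−1},Π}`. -/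
def gapGens (d : ℕ) (S : Fin d → Set ℕ) (P : Set (Equiv.Perm (Fin d))) :
    Set (List (Fin (d + 1))) :=
  {g | ∃ σ ∈ P, ∃ s : Fin d → ℕ, (∀ j, s j ∈ S j) ∧ g = gapGen d σ s}

/-- The constant bi-infinite sequence `a^∞`. -/
def constSeq {d : ℕ} (a : Fin d) : FullShift d := fun _ => a

/-- The finite segment `x_a x_{a+1} ⋯ x_{a+n-1}` of `x`, as a list. -/
def segList {d : ℕ} (x : FullShift d) (a : ℤ) (n : ℕ) : List (Fin d) :=
  List.ofFn fun t : Fin n => x (a + (t : ℕ))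

/-- `w` is a (nonempty) finite concatenation `g_{ℓ_1}⋯g_{ℓ_k}` of generators of `𝒢`. -/
def IsConcat {d : ℕ} (𝒢 : Set (List (Fin d))) (w : List (Fin d)) : Prop :=
  ∃ L : List (List (Fin d)), L ≠ [] ∧ (∀ g ∈ L, g ∈ 𝒢) ∧ w = L.flatten

/-- `x` is a right-infinite concatenation `g_{ℓ_1} g_{ℓ_2} g_{ℓ_3} ⋯` of generators
of `𝒢`, starting at position `a`. -/
def RightParsingFrom {d : ℕ} (𝒢 : Set (List (Fin d))) (x : FullShift d) (a : ℤ) : Prop :=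
  ∃ p : ℕ → ℤ, p 0 = a ∧ StrictMono p ∧ ∀ j : ℕ, ∃ g ∈ 𝒢,
    p (j + 1) = p j + g.length ∧ ∀ (l : ℕ) (hl : l < g.length), x (p j + l) = g[l]

/-- `x` is a left-infinite concatenation `⋯ g_{ℓ_3} g_{ℓ_2} g_{ℓ_1}` of generators
of `𝒢`, ending at position `b` (exclusive). -/
def LeftParsingTo {d : ℕ} (𝒢 : Set (List (Fin d))) (x : FullShift d) (b : ℤ) : Prop :=
  ∃ p : ℕ → ℤ, p 0 = b ∧ StrictAnti p ∧ ∀ j : ℕ, ∃ g ∈ 𝒢,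
    p j = p (j + 1) + g.length ∧ ∀ (l : ℕ) (hl : l < g.length), x (p (j + 1) + l) = g[l]

/-!
The letter `d` closes every generator and occurs nowhere else in it. So the cut points of any
parsing of `x` are exactly the positions right after an occurrence of `d` in `x`, a set that does
not mention the parsing.
-/

/-- The letter `a` is an end marker of the set of words `𝒢`: it is the last letter of each word
of `𝒢` and occurs nowhere else in that word, so its occurrences in a concatenation delimit the
words of `𝒢`. -/
def IsEndMarker {α : Type*} (a : α) (𝒢 : Set (List α)) : Prop :=
  ∀ g ∈ 𝒢, ∃ w, a ∉ w ∧ g = w ++ [a]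

namespace IsEndMarker

variable {α : Type*} {a : α} {𝒢 : Set (List α)} {g : List α}

lemma ne_nil (ha : IsEndMarker a 𝒢) (hg : g ∈ 𝒢) : g ≠ [] := by
  obtain ⟨w, -, rfl⟩ := ha g hg
  exact List.concat_ne_nil a w

lemma getElem_eq_iff (ha : IsEndMarker a 𝒢) (hg : g ∈ 𝒢) {l : ℕ} (hl : l < g.length) :
    g[l] = a ↔ l + 1 = g.length := by
  obtain ⟨w, haw, rfl⟩ := ha g hg
  rw [List.length_append, List.length_singleton] at hl ⊢
  rcases Nat.lt_succ_iff_lt_or_eq.mp hl with hlw | rfl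
  · have hne : w[l] ≠ a := ne_of_mem_of_not_mem (List.getElem_mem hlw) haw
    simp [List.getElem_append_left hlw, hne, hlw.ne]
  · simp

end IsEndMarker

lemma iUnion_Ioc_map_succ_eq_univ {α β : Type*} [LinearOrder α] [SuccOrder α]
    [IsSuccArchimedean α] [LinearOrder β] {f : α → β} (hf : Monotone f)
    (habove : ¬BddAbove (Set.range f)) (hbelow : ¬BddBelow (Set.range f)) :
    ⋃ i, Set.Ioc (f i) (f (Order.succ i)) = Set.univ := by
  refine Set.eq_univ_of_forall fun b => ?_
  obtain ⟨_, ⟨m, rfl⟩, hm⟩ := not_bddBelow_iff.mp hbelow b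
  obtain ⟨_, ⟨n, rfl⟩, hn⟩ := not_bddAbove_iff.mp habove b
  have hb : b ∈ ⋃ i ∈ Set.Ico m n, Set.Ioc (f i) (f (Order.succ i)) := by
    rw [hf.biUnion_Ico_Ioc_map_succ]
    exact ⟨hm, hn.le⟩
  exact Set.iUnion₂_subset_iUnion _ _ hb

section Parsing

variable {n : ℕ} {𝒢 : Set (List (Fin n))} {a : Fin n} {x : FullShift n} {p : ℤ → ℤ}

lemma IsParsing.exists_mem_Ioc (hp : IsParsing 𝒢 x p) (k : ℤ) :
    ∃ j, k ∈ Set.Ioc (p j) (p (j + 1)) :=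
  Set.mem_iUnion.mp <| (iUnion_Ioc_map_succ_eq_univ hp.1.monotone
    hp.1.not_bddAbove_range_of_isSuccArchimedean
    hp.1.not_bddBelow_range_of_isPredArchimedean).symm ▸ Set.mem_univ k

lemma IsParsing.apply_sub_one_eq_iff (hp : IsParsing 𝒢 x p) (ha : IsEndMarker a 𝒢) {j k : ℤ}
    (hk : k ∈ Set.Ioc (p j) (p (j + 1))) : x (k - 1) = a ↔ k = p (j + 1) := by
  obtain ⟨g, hg, hlen, hx⟩ := hp.2 j
  obtain ⟨l, hl⟩ := Int.le.dest (Int.le_sub_one_of_lt hk.1)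
  have hlg : l < g.length := by have := hk.2; lia
  rw [← hl, hx l hlg, ha.getElem_eq_iff hg hlg]
  lia

lemma IsParsing.range_eq (hp : IsParsing 𝒢 x p) (ha : IsEndMarker a 𝒢) :
    Set.range p = {k | x (k - 1) = a} := by
  ext k
  constructor
  · rintro ⟨j, rfl⟩
    have hj : p j ∈ Set.Ioc (p (j - 1)) (p (j - 1 + 1)) := by simp [hp.1 (sub_one_lt j)]
    exact (hp.apply_sub_one_eq_iff ha hj).mpr (by rw [sub_add_cancel])
  · intro hka
    obtain ⟨j, hj⟩ := hp.exists_mem_Ioc k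
    exact ⟨j + 1, ((hp.apply_sub_one_eq_iff ha hj).mp hka).symm⟩

lemma IsEndMarker.uniqueRep (ha : IsEndMarker a 𝒢) : UniqueRep 𝒢 :=
  fun _ _ _ hp hq => (hp.range_eq ha).trans (hq.range_eq ha).symm

end Parsing

lemma isEndMarker_last_gapGens {d : ℕ} (S : Fin d → Set ℕ) (P : Set (Equiv.Perm (Fin d))) :
    IsEndMarker (Fin.last d) (gapGens d S P) := by
  rintro _ ⟨σ, -, s, -, rfl⟩
  refine ⟨_, fun hmem => ?_, rfl⟩
  obtain ⟨_, hrun, hlast⟩ := List.mem_flatten.mp hmem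
  obtain ⟨j, rfl⟩ := List.mem_ofFn.mp hrun
  exact Fin.castSucc_ne_last (σ j) (List.eq_of_mem_replicate hlast).symm

/-- the generalized gap shift is a coded shift (its generators are
nonempty words) and its generating set is a unique representation: every
`x ∈ X_seq` admits exactly one parsing into generator blocks. -/
theorem statement10 (d : ℕ) (hd : 1 ≤ d) (S : Fin d → Set ℕ) (hS : ∀ i, (S i).Nonempty)
    (P : Set (Equiv.Perm (Fin d))) (hP : P.Nonempty) :
    (∀ g ∈ gapGens d S P, g ≠ []) ∧ UniqueRep (gapGens d S P) :=
  have hlast := isEndMarker_last_gapGens S P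
  ⟨fun _ hg => hlast.ne_nil hg, hlast.uniqueRep⟩

end PaperStmt
end
end

section
/- Let β > 1 be a non-integral real number whose beta-expansion b(β) = (b_1 b_2 b_3 ⋯) is not eventually periodic. Then the two-sided Beta-shift X̂_β is a coded shift with unique representation G_β = { b_1 ⋯ b_j i : j ≥ 1, 0 ≤ i < b_{j+1} } ∪ { i : 0 ≤ i < b_1 }; that is, X̂_β is the closure of the set of bi-infinite concatenations of words of G_β, and every such concatenation admits exactly one parsing into words of G_β. -/
open Filter MeasureTheory Topology
open scoped BigOperators ENNReal

noncomputable section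

namespace PaperStmt

/-- Lexicographic order `c ≼ b` on one-sided sequences. -/
def LexLE {D : ℕ} (c b : ℕ → Fin (D + 1)) : Prop :=
  c = b ∨ ∃ n : ℕ, (∀ m : ℕ, m < n → c m = b m) ∧ c n < b n

/-- The two-sided Beta-shift determined by the expansion `b = b(β)`
(indexed from `0`, so `b j` is the digit `b_{j+1}` of the paper):
all `x` every right tail of which is lexicographically `≤ b(β)`. -/
def betaShift {D : ℕ} (b : ℕ → Fin (D + 1)) : Set (FullShift (D + 1)) :=
  {x | ∀ n : ℤ, LexLE (fun j : ℕ => x (n + (j : ℕ))) b}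

/-- The generating set `G_β = {b_1⋯b_j i : j ≥ 1, i < b_{j+1}} ∪ {i : i < b_1}`
(with `0`-based indexing, `b_1⋯b_j i = b 0 ⋯ b (j−1) i` with `i < b j`; the case
`j = 0` gives the single-letter generators `i < b_1`). -/
def betaGens {D : ℕ} (b : ℕ → Fin (D + 1)) : Set (List (Fin (D + 1))) :=
  {g | ∃ j : ℕ, ∃ i : Fin (D + 1), (i : ℕ) < (b j : ℕ) ∧
        g = (List.ofFn fun t : Fin j => b (t : ℕ)) ++ [i]}

/-- `b` is eventually periodic. -/
def EventuallyPeriodic {D : ℕ} (b : ℕ → Fin (D + 1)) : Prop :=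
  ∃ N p : ℕ, 1 ≤ p ∧ ∀ j : ℕ, N ≤ j → b (j + p) = b j

/-- `b` is the beta-expansion of 1 for `β`: it sums to `1` against `β^{-(j+1)}` and is
the lexicographically largest such sequence. -/
def IsBetaExpansion {D : ℕ} (β : ℝ) (b : ℕ → Fin (D + 1)) : Prop :=
  (∑' j : ℕ, ((b j : ℕ) : ℝ) / β ^ (j + 1)) = 1 ∧
    ∀ c : ℕ → Fin (D + 1), (∑' j : ℕ, ((c j : ℕ) : ℝ) / β ^ (j + 1)) = 1 → LexLE c b

/-- The forward generator `g_{j,i} = b_1 ⋯ b_j i` (0-based: `b 0 ⋯ b (j−1) i`). -/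
def fwdGen {D : ℕ} (b : ℕ → Fin (D + 1)) (j : ℕ) (i : Fin (D + 1)) :
    List (Fin (D + 1)) :=
  (List.ofFn fun t : Fin j => b (t : ℕ)) ++ [i]

/-- `G_β` has an infinite chain of (forward) generators, each appearing as a substring
of the interior `b_2 ⋯ b_{j_{k+1}}` of the next. -/
def HasInfiniteChain {D : ℕ} (b : ℕ → Fin (D + 1)) : Prop :=
  ∃ j : ℕ → ℕ, ∃ i : ℕ → Fin (D + 1),
    (∀ k : ℕ, 1 ≤ j k ∧ ((i k : ℕ) < (b (j k) : ℕ))) ∧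
    ∀ k : ℕ, (fwdGen b (j k) (i k)) <:+:
      (List.ofFn fun t : Fin (j (k + 1) - 1) => b (1 + (t : ℕ)))

/-!
Let `x` be a concatenation of generators. A generator `b_1 ⋯ b_j i` with `i < b_{j+1}` is read at a
position `s` exactly when the tail of `x` at `s` first differs from `b` after `j` letters and drops
below it there; in particular at most one generator can be read at each position. If every tail of
`b` is lexicographically at most `b`, then a position inside a generator starts another generator
which ends no later. Hence all tails of `x` lie below `b`, and the cut points of any parsing are
exactly the positions straddled by no generator, a condition that does not mention the parsing.
Conversely, if infinitely many digits of `b` are nonzero, a finitely supported point of the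
Beta-shift has no tail equal to `b`, so every position starts a generator and the point is a
concatenation; such points are dense since the Beta-shift is closed under lowering digits.

That the tails of `b(β)` lie below `b(β)` is Parry's observation: the greedy expansion of `x`
is lexicographically increasing in `x`, and the tails of the greedy expansion of `1` are the greedy
expansions of the points `T^n 1 ≤ 1` of the orbit of `1` under `T y = βy mod 1`.
-/

/-- The tail of `x` at `s` agrees with `b` for exactly `m` letters and is smaller than `b` at the
next one: `x` reads a generator of `betaGens b`, of length `m + 1`, at position `s`. -/
def IsBlock {D : ℕ} (b : ℕ → Fin (D + 1)) (x : FullShift (D + 1)) (s : ℤ) (m : ℕ) : Prop :=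
  (∀ l : ℕ, l < m → x (s + l) = b l) ∧ x (s + m) < b m

/-- The position `c` is straddled by no block of `x`. For concatenations of generators these are the
cut points, see `IsParsing.range_eq`. -/
def IsCut {D : ℕ} (b : ℕ → Fin (D + 1)) (x : FullShift (D + 1)) (c : ℤ) : Prop :=
  ∀ s < c, ∀ m : ℕ, IsBlock b x s m → s + m < c

/-- No tail of `b` exceeds `b` lexicographically: Parry's condition on expansions of `1`. -/
def IsShiftMaximal {D : ℕ} (b : ℕ → Fin (D + 1)) : Prop :=
  ∀ n : ℕ, LexLE (fun j => b (n + j)) b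

section Lexicographic

variable {D : ℕ} {a b c : ℕ → Fin (D + 1)}

theorem lexLE_iff_toLex_le : LexLE c b ↔ toLex c ≤ toLex b :=
  (le_iff_eq_or_lt (a := toLex c) (b := toLex b)).symm

theorem lexLE_iff_forall_apply_le :
    LexLE c b ↔ ∀ n, (∀ m < n, c m = b m) → c n ≤ b n := by
  rw [lexLE_iff_toLex_le]
  refine ⟨fun h n => Pi.apply_le_of_toLex h, fun h => not_lt.1 ?_⟩
  rintro ⟨n, heq, hlt⟩
  exact (h n fun m hm => (heq m hm).symm).not_gt hlt

theorem lexLE_of_le_of_lexLE (hac : a ≤ c) (hcb : LexLE c b) : LexLE a b :=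
  lexLE_iff_toLex_le.2 ((Pi.toLex_monotone hac).trans (lexLE_iff_toLex_le.1 hcb))

theorem isClosed_setOf_lexLE (b : ℕ → Fin (D + 1)) : IsClosed {c | LexLE c b} := by
  simp only [lexLE_iff_forall_apply_le, Set.ofPred_forall]
  refine isClosed_iInter fun n =>
    isClosed_imp ?_ (isClosed_le (continuous_apply n) continuous_const)
  simp only [Set.ofPred_forall]
  refine (Set.finite_lt_nat n).isOpen_biInter fun m _ => ?_
  have heval : Continuous fun c : ℕ → Fin (D + 1) => c m := continuous_apply m
  exact (isOpen_discrete {b m}).preimage heval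

theorem isClosed_betaShift (b : ℕ → Fin (D + 1)) : IsClosed (betaShift b) := by
  simp only [betaShift, Set.ofPred_forall]
  refine isClosed_iInter fun n => ?_
  have htail : Continuous fun (x : FullShift (D + 1)) (j : ℕ) => x (n + (j : ℤ)) :=
    continuous_pi fun j => continuous_apply (n + (j : ℤ))
  exact (isClosed_setOf_lexLE b).preimage htail

theorem isLowerSet_betaShift (b : ℕ → Fin (D + 1)) : IsLowerSet (betaShift b) :=
  fun _ _ hyx hx n => lexLE_of_le_of_lexLE (fun _ => hyx _) (hx n)

theorem IsShiftMaximal.apply_add_le (hb : IsShiftMaximal b) {n t : ℕ}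
    (heq : ∀ u < t, b (n + u) = b u) : b (n + t) ≤ b t :=
  lexLE_iff_forall_apply_le.1 (hb n) t heq

theorem IsShiftMaximal.apply_zero_pos (hb : IsShiftMaximal b)
    (hne : (Function.support b).Nonempty) : 0 < b 0 := by
  obtain ⟨n, hn⟩ := hne
  exact (Fin.pos_iff_ne_zero.2 hn).trans_le (hb.apply_add_le (t := 0) (by simp))

theorem infinite_support_of_not_eventuallyPeriodic (hb : ¬ EventuallyPeriodic b) :
    (Function.support b).Infinite := by
  intro hfin
  obtain ⟨N, hN⟩ := hfin.bddAbove
  have hzero : ∀ j > N, b j = 0 := fun j hj => by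
    by_contra hne
    exact (hN hne).not_gt hj
  exact hb ⟨N + 1, 1, le_rfl, fun j hj => by rw [hzero j hj, hzero (j + 1) (by omega)]⟩

end Lexicographic

section Blocks

variable {D : ℕ} {b : ℕ → Fin (D + 1)} {x : FullShift (D + 1)} {p : ℤ → ℤ}

theorem IsBlock.eq {s : ℤ} {m n : ℕ} (hm : IsBlock b x s m) (hn : IsBlock b x s n) : m = n := by
  rcases lt_trichotomy m n with h | h | h
  · exact absurd (hn.1 m h) hm.2.ne
  · exact h
  · exact absurd (hm.1 n h) hn.2.ne

theorem IsBlock.exists_nested (hb : IsShiftMaximal b) {s s' : ℤ} {m : ℕ} (hm : IsBlock b x s m)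
    (hs : s ≤ s') (hs' : s' ≤ s + m) : ∃ n : ℕ, IsBlock b x s' n ∧ s' + n ≤ s + m := by
  obtain ⟨l, rfl⟩ := Int.le.dest hs
  obtain ⟨k, rfl⟩ : ∃ k, m = l + k := Nat.exists_eq_add_of_le (by omega)
  obtain ⟨hagree, hlast⟩ := hm
  have hinner : ∀ t < k, x (s + l + t) = b (l + t) := fun t ht => by
    simpa [add_assoc] using hagree (l + t) (by omega)
  rw [Nat.cast_add, ← add_assoc] at hlast
  by_cases hcopy : ∀ t < k, x (s + l + t) = b t
  · have hle : b (l + k) ≤ b k := hb.apply_add_le fun t ht => by rw [← hinner t ht, hcopy t ht]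
    exact ⟨k, ⟨hcopy, hlast.trans_le hle⟩, by omega⟩
  · push Not at hcopy
    classical
    obtain ⟨htk, hne⟩ := Nat.find_spec hcopy
    have hbefore : ∀ u < Nat.find hcopy, x (s + l + u) = b u := fun u hu => by
      by_contra hu'
      exact Nat.find_min hcopy hu ⟨hu.trans htk, hu'⟩
    refine ⟨Nat.find hcopy, ⟨hbefore, lt_of_le_of_ne ?_ hne⟩, by omega⟩
    rw [hinner _ htk]
    exact hb.apply_add_le fun u hu => by rw [← hinner u (hu.trans htk), hbefore u hu]

theorem exists_mem_betaGens_iff_exists_isBlock {s e : ℤ} :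
    (∃ g ∈ betaGens b, e = s + g.length ∧ ∀ (l : ℕ) (hl : l < g.length), x (s + l) = g[l]) ↔
      ∃ m : ℕ, IsBlock b x s m ∧ e = s + (m + 1) := by
  constructor
  · rintro ⟨_, ⟨m, i, hi, rfl⟩, rfl, hread⟩
    refine ⟨m, ⟨fun l hl => ?_, ?_⟩, by simp⟩
    · rw [hread l (by simp; omega), List.getElem_append_left (by simpa using hl),
        List.getElem_ofFn]
    · rw [hread m (by simp), List.getElem_concat_length (by simp)]
      exact hi
  · rintro ⟨m, ⟨hagree, hlast⟩, rfl⟩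
    refine ⟨_, ⟨m, x (s + m), hlast, rfl⟩, by simp, fun l hl => ?_⟩
    rcases Nat.lt_succ_iff_lt_or_eq.1 (show l < m + 1 by simpa using hl) with hlt | rfl
    · rw [List.getElem_append_left (by simpa using hlt), List.getElem_ofFn, hagree l hlt]
    · rw [List.getElem_concat_length (by simp)]

theorem isParsing_betaGens_iff : IsParsing (betaGens b) x p ↔
    ∀ j, ∃ m : ℕ, IsBlock b x (p j) m ∧ p (j + 1) = p j + (m + 1) := by
  simp only [IsParsing, exists_mem_betaGens_iff_exists_isBlock, and_iff_right_iff_imp]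
  refine fun h => strictMono_int_of_lt_succ fun j => ?_
  obtain ⟨m, -, hm⟩ := h j
  omega

theorem exists_mem_Ico_of_strictMono (hp : StrictMono p) (c : ℤ) :
    ∃ k, c ∈ Set.Ico (p k) (p (k + 1)) := by
  obtain ⟨_, ⟨a, rfl⟩, ha⟩ := not_bddBelow_iff.1 hp.not_bddBelow_range_of_isPredArchimedean c
  obtain ⟨_, ⟨e, rfl⟩, he⟩ := not_bddAbove_iff.1 hp.not_bddAbove_range_of_isSuccArchimedean c
  by_contra! h
  simp only [Set.mem_Ico, not_and, not_lt] at h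
  exact he.not_ge <| Int.leInduction ha.le (fun k _ hk => h k hk) e
    (hp.lt_iff_lt.1 (ha.trans he)).le

theorem IsParsing.exists_isBlock_le (hb : IsShiftMaximal b) (hp : IsParsing (betaGens b) x p)
    (s : ℤ) : ∃ k, p k ≤ s ∧ ∃ m : ℕ, IsBlock b x s m ∧ s + m < p (k + 1) := by
  obtain ⟨k, hks, hsk⟩ := exists_mem_Ico_of_strictMono hp.1 s
  obtain ⟨n, hn, hnext⟩ := isParsing_betaGens_iff.1 hp k
  obtain ⟨m, hm, hle⟩ := hn.exists_nested hb hks (by omega)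
  exact ⟨k, hks, m, hm, by omega⟩

theorem IsParsing.range_eq_s13 (hb : IsShiftMaximal b) (hp : IsParsing (betaGens b) x p) :
    Set.range p = {c | IsCut b x c} := by
  refine Set.Subset.antisymm ?_ fun c hc => ?_
  · rintro _ ⟨j, rfl⟩ s hs n hn
    obtain ⟨k, hks, m, hm, hlt⟩ := hp.exists_isBlock_le hb s
    rw [hn.eq hm]
    exact hlt.trans_le (hp.1.monotone (hp.1.lt_iff_lt.1 (hks.trans_lt hs)))
  · obtain ⟨k, hkc, hck⟩ := exists_mem_Ico_of_strictMono hp.1 c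
    obtain ⟨m, hm, hnext⟩ := isParsing_betaGens_iff.1 hp k
    refine ⟨k, hkc.eq_of_not_lt fun hlt => ?_⟩
    have := hc (p k) hlt m hm
    omega

theorem uniqueRep_betaGens (hb : IsShiftMaximal b) : UniqueRep (betaGens b) :=
  fun _ _ _ hp hq => (hp.range_eq_s13 hb).trans (hq.range_eq_s13 hb).symm

theorem Xseq_betaGens_subset_betaShift (hb : IsShiftMaximal b) :
    Xseq (betaGens b) ⊆ betaShift b := by
  rintro x ⟨p, hp⟩ s
  obtain ⟨-, -, m, hm, -⟩ := hp.exists_isBlock_le hb s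
  exact Or.inr ⟨m, hm⟩

theorem mem_Xseq_of_forall_exists_isBlock (hb0 : 0 < b 0) (hleft : BddBelow (Function.support x))
    (hblock : ∀ s, ∃ m, IsBlock b x s m) : x ∈ Xseq (betaGens b) := by
  obtain ⟨a, ha⟩ := hleft
  have hzero : ∀ k < a, IsBlock b x k 0 := fun k hk => by
    have hk0 : x k = 0 := by
      by_contra hne
      exact (ha hne).not_gt hk
    simpa [IsBlock, hk0] using hb0
  choose len hlen using hblock
  let next : ℤ → ℤ := fun s => s + (len s + 1)
  -- Cuts at every position up to `a`, then along the forward orbit of `a` under `next`.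
  refine ⟨fun j => next^[j.toNat] (a + min j 0), isParsing_betaGens_iff.2 fun j => ?_⟩
  rcases lt_or_ge j 0 with hj | hj
  · refine ⟨0, ?_, ?_⟩
    · simpa [Int.toNat_of_nonpos hj.le, hj.le] using hzero (a + j) (by omega)
    · simp [Int.toNat_of_nonpos hj.le, Int.toNat_of_nonpos (show j + 1 ≤ 0 by omega), hj.le,
        show j + 1 ≤ 0 by omega, add_assoc]
  · refine ⟨_, hlen _, ?_⟩
    rw [show (j + 1).toNat = j.toNat + 1 by omega, min_eq_right hj, min_eq_right (by omega),
      Function.iterate_succ_apply']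

theorem exists_isBlock_of_finite_support (hb : (Function.support b).Infinite)
    (hx : x ∈ betaShift b) (hfin : (Function.support x).Finite) (s : ℤ) :
    ∃ m, IsBlock b x s m := by
  refine (hx s).resolve_left ?_
  rintro rfl
  exact hb (hfin.preimage (f := fun j : ℕ => s + j) (by simp [Set.InjOn]))

theorem betaShift_subset_closure_finite_support (b : ℕ → Fin (D + 1)) :
    betaShift b ⊆ closure {y ∈ betaShift b | (Function.support y).Finite} := by
  classical
  intro x hx
  let truncate : Finset ℤ → FullShift (D + 1) := fun F => (F : Set ℤ).indicator x
  have hlim : Tendsto truncate atTop (𝓝 x) := by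
    refine tendsto_pi_nhds.2 fun k => tendsto_const_nhds.congr' ?_
    filter_upwards [eventually_ge_atTop {k}] with F hF
    exact (Set.indicator_of_mem (by simpa using hF) x).symm
  refine mem_closure_of_tendsto hlim (Eventually.of_forall fun F => ⟨?_, ?_⟩)
  · exact isLowerSet_betaShift b (Set.indicator_le_self' fun _ _ => Fin.zero_le _) hx
  · exact F.finite_toSet.subset Set.support_indicator_subset

theorem betaShift_eq_codedShift (hb : IsShiftMaximal b) (hinf : (Function.support b).Infinite) :
    betaShift b = codedShift (betaGens b) := by
  refine Set.Subset.antisymm ((betaShift_subset_closure_finite_support b).trans ?_)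
    (closure_minimal (Xseq_betaGens_subset_betaShift hb) (isClosed_betaShift b))
  refine closure_mono fun y ⟨hy, hfin⟩ => ?_
  exact mem_Xseq_of_forall_exists_isBlock (hb.apply_zero_pos hinf.nonempty) hfin.bddBelow
    (exists_isBlock_of_finite_support hinf hy hfin)

end Blocks

/-- The `β`-transformation `T y = βy mod 1`, whose orbits produce greedy expansions in base `β`. -/
def betaMap (β y : ℝ) : ℝ :=
  Int.fract (β * y)

/-- The `n`-th digit (from `0`) of the greedy expansion of `x` in base `β`. It is integer-valued so
that the recursion `β * T^n x = betaDigit β x n + T^(n+1) x` holds for all real `β` and `x`. -/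
def betaDigit (β x : ℝ) (n : ℕ) : ℤ :=
  ⌊β * (betaMap β)^[n] x⌋

section GreedyExpansion

variable {β x y : ℝ}

theorem betaMap_iterate_succ (β x : ℝ) (n : ℕ) :
    (betaMap β)^[n + 1] x = β * (betaMap β)^[n] x - betaDigit β x n := by
  rw [Function.iterate_succ_apply', betaMap, betaDigit, Int.self_sub_floor]

theorem betaMap_iterate_mem_Icc (hx : x ∈ Set.Icc 0 1) (n : ℕ) :
    (betaMap β)^[n] x ∈ Set.Icc 0 1 := by
  cases n with
  | zero => exact hx
  | succ n =>
    rw [Function.iterate_succ_apply']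
    exact ⟨Int.fract_nonneg _, (Int.fract_lt_one _).le⟩

theorem betaDigit_add (β x : ℝ) (n t : ℕ) :
    betaDigit β x (n + t) = betaDigit β ((betaMap β)^[n] x) t := by
  rw [betaDigit, betaDigit, add_comm n t, Function.iterate_add_apply]

theorem betaDigit_le_of_le (hβ : 0 ≤ β) (hxy : x ≤ y) {t : ℕ}
    (heq : ∀ u < t, betaDigit β x u = betaDigit β y u) : betaDigit β x t ≤ betaDigit β y t := by
  have horbit : ∀ u ≤ t, (betaMap β)^[u] x ≤ (betaMap β)^[u] y := by
    intro u
    induction u with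
    | zero => exact fun _ => hxy
    | succ u ih =>
      intro hu
      rw [betaMap_iterate_succ, betaMap_iterate_succ, heq u hu]
      gcongr
      exact ih (by omega)
  exact Int.floor_mono (mul_le_mul_of_nonneg_left (horbit t le_rfl) hβ)

theorem betaDigit_div_pow (hβ : β ≠ 0) (x : ℝ) (n : ℕ) :
    betaDigit β x n / β ^ (n + 1) =
      (betaMap β)^[n] x / β ^ n - (betaMap β)^[n + 1] x / β ^ (n + 1) := by
  rw [betaMap_iterate_succ]
  field_simp
  ring

theorem summable_betaMap_iterate_div_pow (hβ : 1 < β) (x : ℝ) :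
    Summable fun n => (betaMap β)^[n] x / β ^ n := by
  have hgeom : Summable fun n => (β⁻¹) ^ (n + 1) := (summable_nat_add_iff 1).2
    (summable_geometric_of_lt_one (by positivity) (inv_lt_one_of_one_lt₀ hβ))
  refine (summable_nat_add_iff 1).1 (hgeom.of_nonneg_of_le (fun n => ?_) fun n => ?_) <;>
    simp only [Function.iterate_succ_apply', betaMap]
  · exact div_nonneg (Int.fract_nonneg _) (by positivity)
  · rw [inv_pow, inv_eq_one_div]
    gcongr
    exact (Int.fract_lt_one _).le

theorem hasSum_betaDigit (hβ : 1 < β) (x : ℝ) :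
    HasSum (fun n => betaDigit β x n / β ^ (n + 1)) x := by
  have hrem := (summable_betaMap_iterate_div_pow hβ x).hasSum
  simpa [betaDigit_div_pow (by positivity : β ≠ 0)] using
    hrem.sub ((hasSum_nat_add_iff' 1).2 hrem)

theorem le_betaDigit_of_hasSum (hβ : 0 < β) {c : ℕ → ℕ}
    (hc : HasSum (fun j => (c j : ℝ) / β ^ (j + 1)) x) {n : ℕ}
    (heq : ∀ j < n, (c j : ℤ) = betaDigit β x j) : (c n : ℤ) ≤ betaDigit β x n := by
  have hinit : ∑ j ∈ Finset.range n, (c j : ℝ) / β ^ (j + 1) =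
      x - (betaMap β)^[n] x / β ^ n := by
    calc ∑ j ∈ Finset.range n, (c j : ℝ) / β ^ (j + 1)
        = ∑ j ∈ Finset.range n, (betaDigit β x j : ℝ) / β ^ (j + 1) :=
          Finset.sum_congr rfl fun j hj => by rw [← heq j (Finset.mem_range.1 hj), Int.cast_natCast]
      _ = x - (betaMap β)^[n] x / β ^ n := by
          simp only [betaDigit_div_pow hβ.ne', Finset.sum_range_sub', Function.iterate_zero, id_eq,
            pow_zero, div_one]
  have hpartial := sum_le_hasSum (Finset.range (n + 1)) (fun j _ => by positivity) hc
  rw [Finset.sum_range_succ, hinit] at hpartial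
  have hdigit : (c n : ℝ) / β ^ (n + 1) ≤ β * (betaMap β)^[n] x / β ^ (n + 1) := by
    rw [pow_succ', mul_div_mul_left _ _ hβ.ne', ← pow_succ']
    linarith
  exact Int.le_floor.2 (by exact_mod_cast (div_le_div_iff_of_pos_right (by positivity)).1 hdigit)

variable {D : ℕ} {b : ℕ → Fin (D + 1)}

theorem exists_fin_eq_betaDigit (hβ : 0 ≤ β) (hβD : β < D + 1) (hx : x ∈ Set.Icc 0 1) :
    ∃ c : ℕ → Fin (D + 1), ∀ n, ((c n : ℕ) : ℤ) = betaDigit β x n := by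
  suffices h : ∀ n, ∃ i : Fin (D + 1), ((i : ℕ) : ℤ) = betaDigit β x n from Classical.skolem.1 h
  intro n
  obtain ⟨hnonneg, hle⟩ := betaMap_iterate_mem_Icc (β := β) hx n
  have hdigit : 0 ≤ betaDigit β x n := Int.floor_nonneg.2 (mul_nonneg hβ hnonneg)
  have hlt : betaDigit β x n < D + 1 :=
    Int.floor_lt.2 (by push_cast; exact (mul_le_of_le_one_right hβ hle).trans_lt hβD)
  exact ⟨⟨(betaDigit β x n).toNat, by omega⟩, Int.toNat_of_nonneg hdigit⟩

theorem IsBetaExpansion.eq_betaDigit (hβ : 1 < β) (hβD : β < D + 1) (hb : IsBetaExpansion β b)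
    (n : ℕ) : ((b n : ℕ) : ℤ) = betaDigit β 1 n := by
  obtain ⟨hsum, hmax⟩ := hb
  obtain ⟨c, hc⟩ := exists_fin_eq_betaDigit (by positivity) hβD (Set.right_mem_Icc.2 zero_le_one)
  have hcsum : HasSum (fun j => ((c j : ℕ) : ℝ) / β ^ (j + 1)) 1 := by
    simpa only [← hc, Int.cast_natCast] using hasSum_betaDigit hβ 1
  have hbsum : HasSum (fun j => ((b j : ℕ) : ℝ) / β ^ (j + 1)) 1 := by
    rw [← hsum]
    refine (of_not_not fun hdiv => ?_ : Summable _).hasSum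
    simp [tsum_eq_zero_of_not_summable hdiv] at hsum
  rcases hmax c hcsum.tsum_eq with rfl | ⟨k, heq, hlt⟩
  · exact hc n
  · have hle := le_betaDigit_of_hasSum (by positivity) hbsum fun j hj => by rw [← heq j hj, hc j]
    rw [← hc k] at hle
    exact absurd hlt (Fin.le_def.2 (by exact_mod_cast hle)).not_gt

theorem IsBetaExpansion.isShiftMaximal (hβ : 1 < β) (hβD : β < D + 1)
    (hb : IsBetaExpansion β b) : IsShiftMaximal b := by
  have hdigit := hb.eq_betaDigit hβ hβD
  refine fun n => lexLE_iff_forall_apply_le.2 fun t heq => ?_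
  have htail : ∀ u, ((b (n + u) : ℕ) : ℤ) = betaDigit β ((betaMap β)^[n] 1) u := fun u => by
    rw [hdigit, betaDigit_add]
  have hle : betaDigit β ((betaMap β)^[n] 1) t ≤ betaDigit β 1 t :=
    betaDigit_le_of_le (by positivity)
      (betaMap_iterate_mem_Icc (Set.right_mem_Icc.2 zero_le_one) n).2
      fun u hu => by rw [← htail, ← hdigit, heq u hu]
  rw [← htail, ← hdigit] at hle
  exact Fin.le_def.2 (by exact_mod_cast hle)

end GreedyExpansion

theorem statement13_general {D : ℕ} {b : ℕ → Fin (D + 1)} (hb : IsShiftMaximal b)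
    (hinf : (Function.support b).Infinite) :
    betaShift b = codedShift (betaGens b) ∧ UniqueRep (betaGens b) :=
  ⟨betaShift_eq_codedShift hb hinf, uniqueRep_betaGens hb⟩

/-- for non-integral `β > 1` (here `D = ⌊β⌋ ≥ 1`, `D < β < D+1`) whose
expansion `b(β)` is not eventually periodic, the two-sided Beta-shift is the coded
shift generated by `G_β`, and `G_β` is a unique representation. -/
theorem statement13 {D : ℕ} (hD : 1 ≤ D) (β : ℝ) (hβl : (D : ℝ) < β)
    (hβu : β < (D : ℝ) + 1) (b : ℕ → Fin (D + 1)) (hb : IsBetaExpansion β b)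
    (hnp : ¬ EventuallyPeriodic b) :
    betaShift b = codedShift (betaGens b) ∧ UniqueRep (betaGens b) := by
  have hβ : 1 < β := (Nat.one_le_cast.2 hD).trans_lt hβl
  exact statement13_general (hb.isShiftMaximal hβ hβu)
    (infinite_support_of_not_eventuallyPeriodic hnp)

end PaperStmt
end
end
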